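/- arXiv:1302.5548 — 2 statements merged into one kernel-verified Lean document; each statement's English description precedes it below -/
import Mathlib

section
/- Fix σ > 0, λ > 0, p ∈ (0,1), λ₊ > 1 and λ₋ > 0, let m(s) := (σ²/2)s² + λ·( λ₊·p/(λ₊ − s) + λ₋·(1−p)/(λ₋ + s) ) on (−λ₋, λ₊), and for x ∈ ℝ let ŝ(x) ∈ (−λ₋, λ₊) denote the unique solution of m'(s) = x. Define Λ(x) := 2·m(ŝ(x)) / ( ŝ(x)·(ŝ(x) − 1) ) for x large enough that ŝ(x) > 1. Then there exists a constant c > 0 (namely c = 2√(λ·λ₊·p)/(λ₊·(λ₊ − 1))) such that Λ(x)/√x → c as x → +∞; in particular, for fixed k > 0, Λ(k/T) is of order T^{−1/2} as T → 0⁺. -/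
open Filter

/-!
Near `λ₊` the function `m` has a simple pole, `m s ∼ A / (λ₊ - s)` with `A = λ λ₊ p`, and
`m' s ∼ A / (λ₊ - s)²`. Eliminating `λ₊ - s` between the two gives `m s ∼ √A · √(m' s)`, which at
the saddle point reads `m (ŝ x) ∼ √A · √x`. The saddle point itself tends to `λ₊`: since `m` is
convex, `m'` is increasing, so `m' (ŝ x) = x → ∞` forces `ŝ x` to leave every interval `(-λ₋, c]`
with `c < λ₊`.
-/

open Set Topology

/-- The saddle point approximation `2 m(s) / (s (s - 1))` of the local variance, where `m` is the
exponent of the moment generating function `exp (T m(s))`. It is a function of the saddle point `s`;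
the values at `s = 0` and `s = 1` are the junk value `0`. -/
noncomputable def saddlePointLocalVar (m : ℝ → ℝ) (s : ℝ) : ℝ :=
  2 * m s / (s * (s - 1))

/-- `m` blows up at `b` from the left like a simple pole: `m s ∼ A / (b - s)` and
`m' s ∼ A / (b - s) ^ 2`. The equivalences are multiplied out so that `A = 0` is not special. -/
structure HasSimplePoleLeft (m : ℝ → ℝ) (A b : ℝ) : Prop where
  tendsto_mul_sub : Tendsto (fun s => m s * (b - s)) (𝓝[<] b) (𝓝 A)
  tendsto_deriv_mul_sub_sq : Tendsto (fun s => deriv m s * (b - s) ^ 2) (𝓝[<] b) (𝓝 A)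

section SimplePole

variable {m g : ℝ → ℝ} {A b : ℝ}

theorem tendsto_sub_nhdsLT (b : ℝ) : Tendsto (fun s => b - s) (𝓝[<] b) (𝓝 0) := by
  simpa using (tendsto_nhdsWithin_of_tendsto_nhds (tendsto_id (x := 𝓝 b))).const_sub b

theorem hasDerivAt_const_div_sub {s : ℝ} (A : ℝ) (hs : b - s ≠ 0) :
    HasDerivAt (fun t => A / (b - t)) (A / (b - s) ^ 2) s := by
  simpa using (hasDerivAt_const s A).fun_div ((hasDerivAt_id s).const_sub b) hs

theorem hasSimplePoleLeft_of_eventuallyEq (hg : ContDiffAt ℝ 1 g b)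
    (hm : m =ᶠ[𝓝[<] b] fun s => A / (b - s) + g s) : HasSimplePoleLeft m A b := by
  have hsub := tendsto_sub_nhdsLT b
  have hg₀ : Tendsto g (𝓝[<] b) (𝓝 (g b)) := hg.continuousAt.tendsto.mono_left inf_le_left
  have hg₁ : Tendsto (deriv g) (𝓝[<] b) (𝓝 (deriv g b)) :=
    (hg.derivWithin (m := 0) le_rfl).continuousAt.tendsto.mono_left inf_le_left
  have hdiff : ∀ᶠ s in 𝓝[<] b, DifferentiableAt ℝ g s :=
    ((hg.eventually (by simp)).mono fun _ h => h.differentiableAt one_ne_zero).filter_mono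
      inf_le_left
  constructor
  · have hlim : Tendsto (fun s => A + g s * (b - s)) (𝓝[<] b) (𝓝 A) := by
      simpa using (hg₀.mul hsub).const_add A
    refine hlim.congr' ?_
    filter_upwards [hm, self_mem_nhdsWithin] with s hms hs
    rw [hms, add_mul, div_mul_cancel₀ A (sub_pos.2 hs).ne']
  · have hlim : Tendsto (fun s => A + deriv g s * (b - s) ^ 2) (𝓝[<] b) (𝓝 A) := by
      simpa using (hg₁.mul (hsub.pow 2)).const_add A
    refine hlim.congr' ?_
    filter_upwards [eventually_eventually_nhdsWithin.2 hm, hdiff, self_mem_nhdsWithin]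
      with s hms hgs hs
    have hbs : b - s ≠ 0 := (sub_pos.2 hs).ne'
    have hderiv : deriv m s = A / (b - s) ^ 2 + deriv g s := by
      have hms' : m =ᶠ[𝓝 s] fun t => A / (b - t) + g t := by
        rwa [isOpen_Iio.nhdsWithin_eq hs] at hms
      exact hms'.deriv_eq.trans ((hasDerivAt_const_div_sub A hbs).fun_add hgs.hasDerivAt).deriv
    rw [hderiv, add_mul, div_mul_cancel₀ A (pow_ne_zero 2 hbs)]

theorem HasSimplePoleLeft.tendsto_sqrt_deriv_mul_sub (h : HasSimplePoleLeft m A b) :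
    Tendsto (fun s => √(deriv m s) * (b - s)) (𝓝[<] b) (𝓝 √A) := by
  refine h.tendsto_deriv_mul_sub_sq.sqrt.congr' ?_
  filter_upwards [self_mem_nhdsWithin] with s hs
  rw [Real.sqrt_mul' _ (sq_nonneg _), Real.sqrt_sq (sub_pos.2 hs).le]

theorem HasSimplePoleLeft.tendsto_div_sqrt_deriv (h : HasSimplePoleLeft m A b) (hA : 0 < A) :
    Tendsto (fun s => m s / √(deriv m s)) (𝓝[<] b) (𝓝 √A) := by
  have hquot := h.tendsto_mul_sub.div h.tendsto_sqrt_deriv_mul_sub (Real.sqrt_pos.2 hA).ne'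
  rw [Real.div_sqrt] at hquot
  refine hquot.congr' ?_
  filter_upwards [self_mem_nhdsWithin] with s hs
  exact mul_div_mul_right _ _ (sub_pos.2 hs).ne'

theorem HasSimplePoleLeft.tendsto_saddlePointLocalVar_div_sqrt_deriv
    (h : HasSimplePoleLeft m A b) (hA : 0 < A) (hb₀ : b ≠ 0) (hb₁ : b ≠ 1) :
    Tendsto (fun s => saddlePointLocalVar m s / √(deriv m s)) (𝓝[<] b)
      (𝓝 (2 * √A / (b * (b - 1)))) := by
  have hid : Tendsto id (𝓝[<] b) (𝓝 b) := tendsto_nhdsWithin_of_tendsto_nhds tendsto_id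
  have hlim := ((h.tendsto_div_sqrt_deriv hA).const_mul 2).div (hid.mul (hid.sub_const 1))
    (mul_ne_zero hb₀ (sub_ne_zero.2 hb₁))
  refine hlim.congr fun s => ?_
  simp only [saddlePointLocalVar, Pi.div_apply, id_eq]
  ring

end SimplePole

theorem tendsto_nhdsLT_of_tendsto_monotoneOn_atTop {α : Type*} {l : Filter α} {f : ℝ → ℝ}
    {s : α → ℝ} {a b : ℝ} (hf : MonotoneOn f (Ioo a b)) (hs : ∀ᶠ x in l, s x ∈ Ioo a b)
    (hfs : Tendsto (fun x => f (s x)) l atTop) : Tendsto s l (𝓝[<] b) := by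
  refine tendsto_nhdsWithin_iff.2 ⟨tendsto_order.2 ⟨fun c hc => ?_, fun c hc => ?_⟩,
    hs.mono fun x hx => hx.2⟩
  · rcases le_or_gt c a with hca | hac
    · exact hs.mono fun x hx => hca.trans_lt hx.1
    · filter_upwards [hs, hfs.eventually_gt_atTop (f c)] with x hx hfx
      exact hf.reflect_lt ⟨hac, hc⟩ hx hfx
  · exact hs.mono fun x hx => hx.2.trans hc

theorem tendsto_sqrt_mul_comp_div_nhdsGT_zero {f : ℝ → ℝ} {c k : ℝ}
    (hf : Tendsto (fun x => f x / √x) atTop (𝓝 c)) (hk : 0 < k) :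
    Tendsto (fun T => √T * f (k / T)) (𝓝[>] 0) (𝓝 (c * √k)) := by
  have hdiv : Tendsto (fun T => k / T) (𝓝[>] 0) atTop := by
    simpa only [div_eq_mul_inv] using tendsto_inv_nhdsGT_zero.const_mul_atTop hk
  refine ((hf.comp hdiv).mul_const √k).congr fun T => ?_
  have hk' : √k ≠ 0 := (Real.sqrt_pos.2 hk).ne'
  simp only [Function.comp_apply, Real.sqrt_div hk.le]
  field_simp

theorem kou_local_vol_blowup_general {m sHat : ℝ → ℝ} {A a b : ℝ}
    (hconv : ConvexOn ℝ (Ioo a b) m) (hdiff : DifferentiableOn ℝ m (Ioo a b))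
    (hpole : HasSimplePoleLeft m A b) (hA : 0 < A) (hb₀ : b ≠ 0) (hb₁ : b ≠ 1)
    (hmem : ∀ᶠ x in atTop, sHat x ∈ Ioo a b)
    (hsolve : ∀ᶠ x in atTop, deriv m (sHat x) = x) :
    Tendsto (fun x => saddlePointLocalVar m (sHat x) / √x) atTop (𝓝 (2 * √A / (b * (b - 1))))
      ∧ ∀ k : ℝ, 0 < k → Tendsto (fun T => √T * saddlePointLocalVar m (sHat (k / T)))
          (𝓝[>] 0) (𝓝 (2 * √A / (b * (b - 1)) * √k)) := by
  have hmono : MonotoneOn (deriv m) (Ioo a b) :=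
    hconv.monotoneOn_deriv fun s hs => hdiff.differentiableAt (isOpen_Ioo.mem_nhds hs)
  have hsHat : Tendsto sHat atTop (𝓝[<] b) :=
    tendsto_nhdsLT_of_tendsto_monotoneOn_atTop hmono hmem
      (tendsto_id.congr' (hsolve.mono fun _ hx => hx.symm))
  have hlim : Tendsto (fun x => saddlePointLocalVar m (sHat x) / √x) atTop
      (𝓝 (2 * √A / (b * (b - 1)))) := by
    refine ((hpole.tendsto_saddlePointLocalVar_div_sqrt_deriv hA hb₀ hb₁).comp hsHat).congr' ?_
    filter_upwards [hsolve] with x hx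
    simp only [Function.comp_apply, hx]
  exact ⟨hlim, fun k hk => tendsto_sqrt_mul_comp_div_nhdsGT_zero hlim hk⟩

section Kou

/-- The exponent `m` of the moment generating function `exp (T m(s))` in Kou's model, as a function
on all of `ℝ`; it is the paper's `m` on the interval `(-λ₋, λ₊)` between its two poles. -/
noncomputable def kouExponent (σ lam p lamP lamM s : ℝ) : ℝ :=
  σ ^ 2 / 2 * s ^ 2 + lam * (lamP * p / (lamP - s) + lamM * (1 - p) / (lamM + s))

variable {σ lam p lamP lamM : ℝ}

theorem kouExponent_eq_pole_add (σ lam p lamP lamM s : ℝ) :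
    kouExponent σ lam p lamP lamM s = lam * lamP * p / (lamP - s)
      + (σ ^ 2 / 2 * s ^ 2 + lam * lamM * (1 - p) / (lamM + s)) := by
  unfold kouExponent
  ring

theorem differentiableOn_kouExponent :
    DifferentiableOn ℝ (kouExponent σ lam p lamP lamM) (Ioo (-lamM) lamP) := by
  have hP : ∀ s ∈ Ioo (-lamM) lamP, lamP - s ≠ 0 := fun s hs => (sub_pos.2 hs.2).ne'
  have hM : ∀ s ∈ Ioo (-lamM) lamP, lamM + s ≠ 0 := fun s hs => (neg_lt_iff_pos_add'.1 hs.1).ne'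
  unfold kouExponent
  fun_prop (disch := assumption)

theorem convexOn_const_div_comp_affineMap {c : ℝ} (hc : 0 ≤ c) (L : ℝ →ᵃ[ℝ] ℝ) :
    ConvexOn ℝ (L ⁻¹' Ioi 0) fun s => c / L s := by
  simpa [Function.comp_def, div_eq_mul_inv] using
    ((convexOn_zpow (𝕜 := ℝ) (-1)).comp_affineMap L).smul hc

theorem convexOn_kouExponent (hP : 0 ≤ lam * lamP * p) (hM : 0 ≤ lam * lamM * (1 - p)) :
    ConvexOn ℝ (Ioo (-lamM) lamP) (kouExponent σ lam p lamP lamM) := by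
  have hsq : ConvexOn ℝ univ fun s : ℝ => σ ^ 2 / 2 * s ^ 2 :=
    (even_two.convexOn_pow).smul (by positivity)
  have hpoleP := convexOn_const_div_comp_affineMap hP
    (AffineMap.const ℝ ℝ lamP - AffineMap.id ℝ ℝ)
  have hpoleM := convexOn_const_div_comp_affineMap hM
    (AffineMap.const ℝ ℝ lamM + AffineMap.id ℝ ℝ)
  have hsubP : Ioo (-lamM) lamP ⊆ (AffineMap.const ℝ ℝ lamP - AffineMap.id ℝ ℝ) ⁻¹' Ioi 0 :=
    fun s hs => sub_pos.2 hs.2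
  have hsubM : Ioo (-lamM) lamP ⊆ (AffineMap.const ℝ ℝ lamM + AffineMap.id ℝ ℝ) ⁻¹' Ioi 0 :=
    fun s hs => neg_lt_iff_pos_add'.1 hs.1
  have hconv : Convex ℝ (Ioo (-lamM) lamP) := convex_Ioo _ _
  exact ((hpoleP.subset hsubP hconv).add
    ((hsq.subset (subset_univ _) hconv).add (hpoleM.subset hsubM hconv))).congr
      fun s _ => (kouExponent_eq_pole_add σ lam p lamP lamM s).symm

theorem hasSimplePoleLeft_of_eqOn_kouExponent {m : ℝ → ℝ}
    (hm : EqOn m (kouExponent σ lam p lamP lamM) (Ioo (-lamM) lamP)) (h : -lamM < lamP) :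
    HasSimplePoleLeft m (lam * lamP * p) lamP := by
  have hM : lamM + lamP ≠ 0 := (neg_lt_iff_pos_add'.1 h).ne'
  refine hasSimplePoleLeft_of_eventuallyEq
    (g := fun s => σ ^ 2 / 2 * s ^ 2 + lam * lamM * (1 - p) / (lamM + s))
    (by fun_prop (disch := assumption)) ?_
  filter_upwards [Ioo_mem_nhdsLT h] with s hs
  rw [hm hs, kouExponent_eq_pole_add]

end Kou

/-- Short-time blowup of order `T^{−1/2}` in the Kou model:
`Λ(x) = 2m(ŝ(x))/(ŝ(x)(ŝ(x)−1))` satisfies `Λ(x)/√x → c` as `x → +∞` with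
`c = 2√(λλ₊p)/(λ₊(λ₊−1)) > 0`; in particular, for fixed `k > 0`,
`√T·Λ(k/T) → c·√k` as `T → 0⁺`. -/
theorem kou_local_vol_blowup
    (σ lam p lamP lamM : ℝ)
    (hσ : 0 < σ) (hlam : 0 < lam) (hp0 : 0 < p) (hp1 : p < 1)
    (hlamP : 1 < lamP) (hlamM : 0 < lamM)
    (m : ℝ → ℝ)
    (hm : ∀ s ∈ Set.Ioo (-lamM) lamP,
      m s = σ ^ 2 / 2 * s ^ 2 + lam * (lamP * p / (lamP - s) + lamM * (1 - p) / (lamM + s)))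
    (sHat : ℝ → ℝ)
    (hmem : ∀ x : ℝ, sHat x ∈ Set.Ioo (-lamM) lamP)
    (hsolve : ∀ x : ℝ, deriv m (sHat x) = x)
    (huniq : ∀ x s : ℝ, s ∈ Set.Ioo (-lamM) lamP → deriv m s = x → s = sHat x)
    (Λ : ℝ → ℝ)
    (hΛ : ∀ x : ℝ, Λ x = 2 * m (sHat x) / (sHat x * (sHat x - 1))) :
    ∃ c : ℝ, 0 < c ∧ c = 2 * Real.sqrt (lam * lamP * p) / (lamP * (lamP - 1))
      ∧ Tendsto (fun x : ℝ => Λ x / Real.sqrt x) atTop (nhds c)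
      ∧ ∀ k : ℝ, 0 < k →
          Tendsto (fun T : ℝ => Real.sqrt T * Λ (k / T))
            (nhdsWithin 0 (Set.Ioi 0)) (nhds (c * Real.sqrt k)) := by
  have hm' : EqOn m (kouExponent σ lam p lamP lamM) (Ioo (-lamM) lamP) := hm
  have hA : 0 < lam * lamP * p := by positivity
  have hB : 0 ≤ lam * lamM * (1 - p) := mul_nonneg (by positivity) (sub_nonneg.2 hp1.le)
  have hc : 0 < 2 * √(lam * lamP * p) / (lamP * (lamP - 1)) :=
    div_pos (by positivity) (mul_pos (by positivity) (sub_pos.2 hlamP))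
  obtain rfl : Λ = fun x => saddlePointLocalVar m (sHat x) := funext hΛ
  exact ⟨_, hc, rfl, kou_local_vol_blowup_general
    ((convexOn_kouExponent hA.le hB).congr hm'.symm) (differentiableOn_kouExponent.congr hm)
    (hasSimplePoleLeft_of_eqOn_kouExponent hm' (by linarith)) hA (by positivity) hlamP.ne'
    (.of_forall hmem) (.of_forall hsolve)⟩
end

section
/- Fix σ > 0 and λ > 0, let Φ and φ denote the standard normal cumulative distribution function and density, and for K, T > 0 set d₂(K,T) := ( log(1/K) + (λ − σ²/2)T ) / (σ√T) and σ²_loc(K,T) := σ² + 2λσ√T · Φ(d₂(K,T)) / φ(d₂(K,T)). Then for every fixed K with 0 < K < 1, T · log( σ²_loc(K,T) ) → (log K)² / (2σ²) as T → 0⁺; in particular σ²_loc(K,T) blows up like exp(const/T) as T → 0⁺. -/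
open Filter

/-!
Write `Φ` and `φ` for the Gaussian distribution function and density. Since `√T * d₂` tends to
`log (1 / K) / σ > 0`, we have `d₂ → ∞`, so `Φ d₂ → 1` and the blowup comes entirely from
`1 / φ d₂`. Over a common denominator, the local variance is `(σ² φ d₂ + 2λσ √T Φ d₂) / φ d₂`.
The numerator is bounded and at least a constant times `√T`, so it contributes nothing to the limit
of `T * log σ²_loc`, while `-T * log (φ d₂)` has the same limit as `T * d₂ ^ 2 / 2`.
-/

section

open ProbabilityTheory Set Topology
open scoped NNReal

lemma tendsto_mul_log_of_mul_rpow_le {g : ℝ → ℝ} {a b p : ℝ} (ha : 0 < a)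
    (hlower : ∀ᶠ x in 𝓝[>] 0, a * x ^ p ≤ g x) (hupper : ∀ᶠ x in 𝓝[>] 0, g x ≤ b) :
    Tendsto (fun x ↦ x * Real.log (g x)) (𝓝[>] 0) (𝓝 0) := by
  have hid : Tendsto (fun x : ℝ ↦ x) (𝓝[>] 0) (𝓝 0) :=
    tendsto_nhdsWithin_of_tendsto_nhds tendsto_id
  have hlog : Tendsto (fun x : ℝ ↦ x * Real.log x) (𝓝[>] 0) (𝓝 0) := by
    simpa only [zero_mul] using
      tendsto_nhdsWithin_of_tendsto_nhds (Real.continuous_mul_log.tendsto 0)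
  have hleft : Tendsto (fun x ↦ x * Real.log a + p * (x * Real.log x)) (𝓝[>] 0) (𝓝 0) := by
    simpa using (hid.mul_const (Real.log a)).add (hlog.const_mul p)
  have hright : Tendsto (fun x ↦ x * Real.log b) (𝓝[>] 0) (𝓝 0) := by
    simpa using hid.mul_const (Real.log b)
  refine tendsto_of_tendsto_of_tendsto_of_le_of_le' hleft hright ?_ ?_
  · filter_upwards [hlower, self_mem_nhdsWithin] with x hx (hx0 : 0 < x)
    calc x * Real.log a + p * (x * Real.log x)
        = x * Real.log (a * x ^ p) := by
          rw [Real.log_mul ha.ne' (Real.rpow_pos_of_pos hx0 p).ne', Real.log_rpow hx0]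
          ring
      _ ≤ x * Real.log (g x) := by gcongr
  · filter_upwards [hlower, hupper, self_mem_nhdsWithin] with x hx hxb (hx0 : 0 < x)
    have hg : 0 < g x := lt_of_lt_of_le (by positivity) hx
    gcongr

lemma gaussianPDFReal_le (μ : ℝ) (v : ℝ≥0) (x : ℝ) :
    gaussianPDFReal μ v x ≤ (√(2 * Real.pi * v))⁻¹ := by
  refine mul_le_of_le_one_right (by positivity) (Real.exp_le_one_iff.2 ?_)
  exact div_nonpos_of_nonpos_of_nonneg (neg_nonpos.2 (sq_nonneg _)) (by positivity)

lemma log_gaussianPDFReal (μ : ℝ) {v : ℝ≥0} (hv : v ≠ 0) (x : ℝ) :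
    Real.log (gaussianPDFReal μ v x) =
      -Real.log √(2 * Real.pi * v) - (x - μ) ^ 2 / (2 * v) := by
  rw [gaussianPDFReal, Real.log_mul (by positivity) (Real.exp_ne_zero _), Real.log_inv,
    Real.log_exp, neg_div, ← sub_eq_add_neg]

lemma cdf_gaussianReal_eq_setIntegral (μ : ℝ) {v : ℝ≥0} (hv : v ≠ 0) (x : ℝ) :
    cdf (gaussianReal μ v) x = ∫ t in Iic x, gaussianPDFReal μ v t := by
  rw [cdf_eq_real, MeasureTheory.measureReal_def, gaussianReal_apply_eq_integral μ hv,
    ENNReal.toReal_ofReal (MeasureTheory.integral_nonneg (gaussianPDFReal_nonneg μ v))]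

lemma gaussianPDFReal_zero_one (x : ℝ) :
    gaussianPDFReal 0 1 x = Real.exp (-x ^ 2 / 2) / √(2 * Real.pi) := by
  simp only [gaussianPDFReal, NNReal.coe_one, mul_one, sub_zero, inv_mul_eq_div]

lemma tendsto_atTop_of_sqrt_mul {d : ℝ → ℝ} {a : ℝ} (ha : 0 < a)
    (hd : Tendsto (fun T ↦ √T * d T) (𝓝[>] 0) (𝓝 a)) : Tendsto d (𝓝[>] 0) atTop := by
  have hinv : Tendsto (fun T ↦ √T⁻¹) (𝓝[>] 0) atTop :=
    Real.tendsto_sqrt_atTop.comp tendsto_inv_nhdsGT_zero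
  refine (hd.pos_mul_atTop ha hinv).congr' ?_
  filter_upwards [self_mem_nhdsWithin] with T (hT : 0 < T)
  rw [Real.sqrt_inv]
  field_simp

lemma tendsto_mul_log_gaussianPDFReal (μ : ℝ) {v : ℝ≥0} (hv : v ≠ 0) {d : ℝ → ℝ} {a : ℝ}
    (hd : Tendsto (fun T ↦ √T * d T) (𝓝[>] 0) (𝓝 a)) :
    Tendsto (fun T ↦ T * Real.log (gaussianPDFReal μ v (d T))) (𝓝[>] 0)
      (𝓝 (-(a ^ 2 / (2 * v)))) := by
  have hid : Tendsto (fun T : ℝ ↦ T) (𝓝[>] 0) (𝓝 0) :=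
    tendsto_nhdsWithin_of_tendsto_nhds tendsto_id
  have hsqrt : Tendsto (fun T ↦ √T) (𝓝[>] 0) (𝓝 0) := by
    simpa only [Real.sqrt_zero] using hid.sqrt
  have hcentred : Tendsto (fun T ↦ √T * d T - √T * μ) (𝓝[>] 0) (𝓝 a) := by
    simpa using hd.sub (hsqrt.mul_const μ)
  have hlim : Tendsto
      (fun T ↦ T * -Real.log √(2 * Real.pi * v) - (√T * d T - √T * μ) ^ 2 / (2 * v))
      (𝓝[>] 0) (𝓝 (-(a ^ 2 / (2 * v)))) := by
    simpa using (hid.mul_const (-Real.log √(2 * Real.pi * v))).sub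
      ((hcentred.pow 2).div_const (2 * (v : ℝ)))
  refine hlim.congr' ?_
  filter_upwards [self_mem_nhdsWithin] with T (hT : 0 < T)
  rw [log_gaussianPDFReal μ hv, ← mul_sub, mul_pow, Real.sq_sqrt hT.le]
  ring

lemma tendsto_mul_log_gaussianPDFReal_add_cdf (μ : ℝ) (v : ℝ≥0) {A b : ℝ} (hA : 0 ≤ A)
    (hb : 0 < b) {d : ℝ → ℝ} (hd : Tendsto d (𝓝[>] 0) atTop) :
    Tendsto (fun T ↦ T * Real.log
        (A * gaussianPDFReal μ v (d T) + b * √T * cdf (gaussianReal μ v) (d T)))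
      (𝓝[>] 0) (𝓝 0) := by
  have hcdf : ∀ᶠ T in 𝓝[>] 0, 1 / 2 ≤ cdf (gaussianReal μ v) (d T) :=
    ((tendsto_cdf_atTop _).comp hd).eventually_const_le (by norm_num)
  have hle_one : ∀ᶠ T : ℝ in 𝓝[>] 0, T ≤ 1 :=
    (eventually_le_nhds zero_lt_one).filter_mono nhdsWithin_le_nhds
  refine tendsto_mul_log_of_mul_rpow_le (a := b / 2) (b := A * (√(2 * Real.pi * v))⁻¹ + b)
    (p := 1 / 2) (half_pos hb) ?_ ?_
  · filter_upwards [hcdf] with T hT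
    calc b / 2 * T ^ (1 / 2 : ℝ)
        = b * √T * (1 / 2) := by rw [← Real.sqrt_eq_rpow]; ring
      _ ≤ b * √T * cdf (gaussianReal μ v) (d T) := by gcongr
      _ ≤ A * gaussianPDFReal μ v (d T) + b * √T * cdf (gaussianReal μ v) (d T) :=
        le_add_of_nonneg_left (mul_nonneg hA (gaussianPDFReal_nonneg μ v _))
  · filter_upwards [hle_one] with T hT
    calc A * gaussianPDFReal μ v (d T) + b * √T * cdf (gaussianReal μ v) (d T)
        ≤ A * (√(2 * Real.pi * v))⁻¹ + b * 1 * 1 := by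
          gcongr
          · exact gaussianPDFReal_le μ v _
          · exact cdf_nonneg _ _
          · exact Real.sqrt_le_one.2 hT
          · exact cdf_le_one _ _
      _ = A * (√(2 * Real.pi * v))⁻¹ + b := by ring

theorem tendsto_mul_log_add_cdf_div_gaussianPDFReal (μ : ℝ) {v : ℝ≥0} (hv : v ≠ 0) {A b : ℝ}
    (hA : 0 ≤ A) (hb : 0 < b) {d : ℝ → ℝ} {a : ℝ} (ha : 0 < a)
    (hd : Tendsto (fun T ↦ √T * d T) (𝓝[>] 0) (𝓝 a)) :
    Tendsto (fun T ↦ T * Real.log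
        (A + b * √T * cdf (gaussianReal μ v) (d T) / gaussianPDFReal μ v (d T)))
      (𝓝[>] 0) (𝓝 (a ^ 2 / (2 * v))) := by
  have hd_top : Tendsto d (𝓝[>] 0) atTop := tendsto_atTop_of_sqrt_mul ha hd
  have hlim := (tendsto_mul_log_gaussianPDFReal_add_cdf μ v hA hb hd_top).sub
    (tendsto_mul_log_gaussianPDFReal μ hv hd)
  rw [zero_sub, neg_neg] at hlim
  refine hlim.congr' ?_
  have hcdf : ∀ᶠ T in 𝓝[>] 0, 0 < cdf (gaussianReal μ v) (d T) :=
    ((tendsto_cdf_atTop _).comp hd_top).eventually_const_lt one_pos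
  filter_upwards [hcdf, self_mem_nhdsWithin] with T hΦ (hT : 0 < T)
  have hφ : 0 < gaussianPDFReal μ v (d T) := gaussianPDFReal_pos μ v _ hv
  rw [← mul_sub, ← Real.log_div (by positivity) hφ.ne', add_div, mul_div_cancel_right₀ _ hφ.ne']

lemma tendsto_sqrt_mul_add_mul_div_mul_sqrt (l m s : ℝ) :
    Tendsto (fun T ↦ √T * ((l + m * T) / (s * √T))) (𝓝[>] 0) (𝓝 (l / s)) := by
  have hlim : Tendsto (fun T ↦ (l + m * T) / s) (𝓝[>] 0) (𝓝 (l / s)) :=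
    tendsto_nhdsWithin_of_tendsto_nhds <|
      Continuous.tendsto' (by fun_prop) 0 _ (by rw [mul_zero, add_zero])
  refine hlim.congr' ?_
  filter_upwards [self_mem_nhdsWithin] with T (hT : 0 < T)
  rw [mul_comm s, ← mul_div_assoc, mul_div_mul_left _ _ (Real.sqrt_pos.2 hT).ne']

end

/-- Below the money (`0 < K < 1`), the jump-to-ruin local variance
`σ²_loc(K,T) = σ² + 2λσ√T·Φ(d₂(K,T))/φ(d₂(K,T))` blows up like `exp(const/T)`:
`T·log σ²_loc(K,T) → (log K)²/(2σ²)` as `T → 0⁺`. -/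
theorem jump_to_ruin_local_vol_itm_blowup
    (σ lam : ℝ) (hσ : 0 < σ) (hlam : 0 < lam)
    (Φ φ : ℝ → ℝ)
    (hΦ : ∀ x : ℝ, Φ x = ∫ t in Set.Iic x, Real.exp (-t ^ 2 / 2) / Real.sqrt (2 * Real.pi))
    (hφ : ∀ x : ℝ, φ x = Real.exp (-x ^ 2 / 2) / Real.sqrt (2 * Real.pi))
    (d₂ : ℝ → ℝ → ℝ)
    (hd₂ : ∀ K T : ℝ,
      d₂ K T = (Real.log (1 / K) + (lam - σ ^ 2 / 2) * T) / (σ * Real.sqrt T))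
    (σloc2 : ℝ → ℝ → ℝ)
    (hσloc2 : ∀ K T : ℝ,
      σloc2 K T = σ ^ 2 + 2 * lam * σ * Real.sqrt T * Φ (d₂ K T) / φ (d₂ K T))
    (K : ℝ) (hK0 : 0 < K) (hK1 : K < 1) :
    Tendsto (fun T : ℝ => T * Real.log (σloc2 K T))
      (nhdsWithin 0 (Set.Ioi 0)) (nhds (Real.log K ^ 2 / (2 * σ ^ 2))) := by
  have hφ_eq : φ = ProbabilityTheory.gaussianPDFReal 0 1 := by
    funext x
    rw [hφ, gaussianPDFReal_zero_one]
  have hΦ_eq : Φ = ProbabilityTheory.cdf (ProbabilityTheory.gaussianReal 0 1) := by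
    funext x
    simp only [hΦ, cdf_gaussianReal_eq_setIntegral 0 one_ne_zero, gaussianPDFReal_zero_one]
  have hlogK : 0 < -Real.log K / σ := div_pos (neg_pos.2 (Real.log_neg hK0 hK1)) hσ
  have hd : Tendsto (fun T ↦ √T * d₂ K T) (nhdsWithin 0 (Set.Ioi 0))
      (nhds (-Real.log K / σ)) := by
    simp only [hd₂, one_div, Real.log_inv]
    exact tendsto_sqrt_mul_add_mul_div_mul_sqrt _ _ _
  have hlim := tendsto_mul_log_add_cdf_div_gaussianPDFReal 0 one_ne_zero (sq_nonneg σ)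
    (show 0 < 2 * lam * σ by positivity) hlogK hd
  have hexponent : (-Real.log K / σ) ^ 2 / (2 * (1 : NNReal)) = Real.log K ^ 2 / (2 * σ ^ 2) := by
    rw [NNReal.coe_one, mul_one, div_pow, neg_sq, div_div, mul_comm]
  simpa only [hσloc2, hΦ_eq, hφ_eq, hexponent] using hlim
end
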